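/- Let (A,∇_A,η_A,Δ_A,ε_A) and (B,∇_B,η_B,Δ_B,ε_B) be Frobenius algebras over k and let τ : B⊗A → A⊗B be a twisting map satisfying the comultiplication-compatibility condition (Δ_A⊗Δ_B)∘τ = (1_A⊗τ⊗1_B)∘(τ⊗τ)∘(1_B⊗τ⊗1_A)∘(Δ_B⊗Δ_A). Then (A⊗_τ B, ∇_{A⊗_τ B}, η_{A⊗_τ B}, Δ_{A⊗_τ B}, ε_{A⊗_τ B}) is a Frobenius algebra. -/

import Mathlib

open scoped TensorProduct

namespace TTP

section Defs

variable (k : Type*) [Field k]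

section MidMap

variable {X P Q Y R S : Type*}
  [AddCommGroup X] [Module k X] [AddCommGroup P] [Module k P]
  [AddCommGroup Q] [Module k Q] [AddCommGroup Y] [Module k Y]
  [AddCommGroup R] [Module k R] [AddCommGroup S] [Module k S]

/-- The map `1_X ⊗ f ⊗ 1_Y` (with the canonical reassociations). -/
noncomputable def midMap (f : P ⊗[k] Q →ₗ[k] R ⊗[k] S) :
    (X ⊗[k] P) ⊗[k] (Q ⊗[k] Y) →ₗ[k] (X ⊗[k] R) ⊗[k] (S ⊗[k] Y) :=
  (TensorProduct.assoc k (X ⊗[k] R) S Y).toLinearMap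
    ∘ₗ TensorProduct.map (TensorProduct.assoc k X R S).symm.toLinearMap LinearMap.id
    ∘ₗ TensorProduct.map (TensorProduct.map LinearMap.id f) LinearMap.id
    ∘ₗ TensorProduct.map (TensorProduct.assoc k X P Q).toLinearMap LinearMap.id
    ∘ₗ (TensorProduct.assoc k (X ⊗[k] P) Q Y).symm.toLinearMap

end MidMap

variable {A B : Type*} [AddCommGroup A] [Module k A] [AddCommGroup B] [Module k B]

/-- `(A, mul, unit)` is a unital associative `k`-algebra (diagrammatically). -/
def IsUnitalAssoc (mul : A ⊗[k] A →ₗ[k] A) (unit : k →ₗ[k] A) : Prop :=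
  mul ∘ₗ TensorProduct.map unit LinearMap.id ∘ₗ (TensorProduct.lid k A).symm.toLinearMap
      = LinearMap.id
  ∧ mul ∘ₗ TensorProduct.map LinearMap.id unit ∘ₗ (TensorProduct.rid k A).symm.toLinearMap
      = LinearMap.id
  ∧ mul ∘ₗ TensorProduct.map mul LinearMap.id
      = mul ∘ₗ TensorProduct.map LinearMap.id mul ∘ₗ (TensorProduct.assoc k A A A).toLinearMap

/-- `(A, comul, counit)` is a counital coassociative `k`-coalgebra (diagrammatically). -/
def IsCounitalCoassoc (comul : A →ₗ[k] A ⊗[k] A) (counit : A →ₗ[k] k) : Prop :=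
  (TensorProduct.lid k A).toLinearMap ∘ₗ TensorProduct.map counit LinearMap.id ∘ₗ comul
      = LinearMap.id
  ∧ (TensorProduct.rid k A).toLinearMap ∘ₗ TensorProduct.map LinearMap.id counit ∘ₗ comul
      = LinearMap.id
  ∧ TensorProduct.map comul LinearMap.id ∘ₗ comul
      = (TensorProduct.assoc k A A A).symm.toLinearMap
          ∘ₗ TensorProduct.map LinearMap.id comul ∘ₗ comul

/-- `τ : B ⊗ A → A ⊗ B` is a twisting map for the algebras `A` and `B`:
it is compatible with both units and with both multiplications. -/
def IsTwisting (mulA : A ⊗[k] A →ₗ[k] A) (unitA : k →ₗ[k] A)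
    (mulB : B ⊗[k] B →ₗ[k] B) (unitB : k →ₗ[k] B)
    (τ : B ⊗[k] A →ₗ[k] A ⊗[k] B) : Prop :=
  τ ∘ₗ TensorProduct.map LinearMap.id unitA
      = TensorProduct.map unitA LinearMap.id ∘ₗ (TensorProduct.comm k B k).toLinearMap
  ∧ τ ∘ₗ TensorProduct.map unitB LinearMap.id
      = TensorProduct.map LinearMap.id unitB ∘ₗ (TensorProduct.comm k k A).toLinearMap
  ∧ τ ∘ₗ TensorProduct.map mulB mulA
      = TensorProduct.map mulA mulB ∘ₗ midMap k τ ∘ₗ TensorProduct.map τ τ ∘ₗ midMap k τ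

/-- The multiplication `(∇_A ⊗ ∇_B) ∘ (1 ⊗ τ ⊗ 1)` of the twisted tensor product. -/
noncomputable def tMul (mulA : A ⊗[k] A →ₗ[k] A) (mulB : B ⊗[k] B →ₗ[k] B)
    (τ : B ⊗[k] A →ₗ[k] A ⊗[k] B) :
    (A ⊗[k] B) ⊗[k] (A ⊗[k] B) →ₗ[k] A ⊗[k] B :=
  TensorProduct.map mulA mulB ∘ₗ midMap k τ

/-- The unit `(η_A ⊗ η_B) ∘ (k ≅ k ⊗ k)` of the twisted tensor product. -/
noncomputable def tUnit (unitA : k →ₗ[k] A) (unitB : k →ₗ[k] B) : k →ₗ[k] A ⊗[k] B :=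
  TensorProduct.map unitA unitB ∘ₗ (TensorProduct.lid k k).symm.toLinearMap

/-- The comultiplication `(1 ⊗ τ⁻¹ ⊗ 1) ∘ (Δ_A ⊗ Δ_B)` of the twisted tensor product. -/
noncomputable def tComul (comulA : A →ₗ[k] A ⊗[k] A) (comulB : B →ₗ[k] B ⊗[k] B)
    (τinv : A ⊗[k] B →ₗ[k] B ⊗[k] A) :
    A ⊗[k] B →ₗ[k] (A ⊗[k] B) ⊗[k] (A ⊗[k] B) :=
  midMap k τinv ∘ₗ TensorProduct.map comulA comulB

/-- The counit `(k ⊗ k ≅ k) ∘ (ε_A ⊗ ε_B)` of the twisted tensor product. -/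
noncomputable def tCounit (counitA : A →ₗ[k] k) (counitB : B →ₗ[k] k) :
    A ⊗[k] B →ₗ[k] k :=
  (TensorProduct.lid k k).toLinearMap ∘ₗ TensorProduct.map counitA counitB

/-- Compatibility of `τ` with the counits (diagram (5) of the paper). -/
def CounitCompat (counitA : A →ₗ[k] k) (counitB : B →ₗ[k] k)
    (τ : B ⊗[k] A →ₗ[k] A ⊗[k] B) : Prop :=
  TensorProduct.map counitA LinearMap.id ∘ₗ τ
      = (TensorProduct.comm k B k).toLinearMap ∘ₗ TensorProduct.map LinearMap.id counitA
  ∧ TensorProduct.map LinearMap.id counitB ∘ₗ τ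
      = (TensorProduct.comm k k A).toLinearMap ∘ₗ TensorProduct.map counitB LinearMap.id

/-- Compatibility of `τ` with the comultiplications (diagram (6) of the paper):
`(Δ_A ⊗ Δ_B)∘τ = (1⊗τ⊗1)∘(τ⊗τ)∘(1⊗τ⊗1)∘(Δ_B ⊗ Δ_A)`. -/
def ComulCompat (comulA : A →ₗ[k] A ⊗[k] A) (comulB : B →ₗ[k] B ⊗[k] B)
    (τ : B ⊗[k] A →ₗ[k] A ⊗[k] B) : Prop :=
  TensorProduct.map comulA comulB ∘ₗ τ
      = midMap k τ ∘ₗ TensorProduct.map τ τ ∘ₗ midMap k τ ∘ₗ TensorProduct.map comulB comulA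

/-- `(f ⊗ 1_B) ∘ τ = (1_A ⊗ τ) ∘ (τ ⊗ 1_A) ∘ (1_B ⊗ f)` for `f : A → A ⊗ A`. -/
def MidACompat (f : A →ₗ[k] A ⊗[k] A) (τ : B ⊗[k] A →ₗ[k] A ⊗[k] B) : Prop :=
  TensorProduct.map f LinearMap.id ∘ₗ τ
    = (TensorProduct.assoc k A A B).symm.toLinearMap
      ∘ₗ TensorProduct.map LinearMap.id τ
      ∘ₗ (TensorProduct.assoc k A B A).toLinearMap
      ∘ₗ TensorProduct.map τ LinearMap.id
      ∘ₗ (TensorProduct.assoc k B A A).symm.toLinearMap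
      ∘ₗ TensorProduct.map LinearMap.id f

/-- `(1_A ⊗ g) ∘ τ = (τ ⊗ 1_B) ∘ (1_B ⊗ τ) ∘ (g ⊗ 1_A)` for `g : B → B ⊗ B`. -/
def MidBCompat (g : B →ₗ[k] B ⊗[k] B) (τ : B ⊗[k] A →ₗ[k] A ⊗[k] B) : Prop :=
  TensorProduct.map LinearMap.id g ∘ₗ τ
    = (TensorProduct.assoc k A B B).toLinearMap
      ∘ₗ TensorProduct.map τ LinearMap.id
      ∘ₗ (TensorProduct.assoc k B A B).symm.toLinearMap
      ∘ₗ TensorProduct.map LinearMap.id τ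
      ∘ₗ (TensorProduct.assoc k B B A).toLinearMap
      ∘ₗ TensorProduct.map g LinearMap.id

/-- `(A, mul, unit, comul, counit)` is a Frobenius algebra (diagrammatically). -/
def IsFrobenius (mul : A ⊗[k] A →ₗ[k] A) (unit : k →ₗ[k] A)
    (comul : A →ₗ[k] A ⊗[k] A) (counit : A →ₗ[k] k) : Prop :=
  IsUnitalAssoc k mul unit
  ∧ IsCounitalCoassoc k comul counit
  ∧ comul ∘ₗ mul
      = TensorProduct.map LinearMap.id mul ∘ₗ (TensorProduct.assoc k A A A).toLinearMap
          ∘ₗ TensorProduct.map comul LinearMap.id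
  ∧ comul ∘ₗ mul
      = TensorProduct.map mul LinearMap.id ∘ₗ (TensorProduct.assoc k A A A).symm.toLinearMap
          ∘ₗ TensorProduct.map LinearMap.id comul

/-- `(A, mul, unit, comul, counit)` is a bialgebra (diagrammatically). -/
def IsBialgebra (mul : A ⊗[k] A →ₗ[k] A) (unit : k →ₗ[k] A)
    (comul : A →ₗ[k] A ⊗[k] A) (counit : A →ₗ[k] k) : Prop :=
  IsUnitalAssoc k mul unit
  ∧ IsCounitalCoassoc k comul counit
  ∧ counit ∘ₗ mul = (TensorProduct.lid k k).toLinearMap ∘ₗ TensorProduct.map counit counit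
  ∧ comul ∘ₗ unit = TensorProduct.map unit unit ∘ₗ (TensorProduct.lid k k).symm.toLinearMap
  ∧ counit ∘ₗ unit = LinearMap.id
  ∧ comul ∘ₗ mul
      = TensorProduct.map mul mul ∘ₗ midMap k (TensorProduct.comm k A A).toLinearMap
          ∘ₗ TensorProduct.map comul comul

/-- `(A, mul, unit, comul, counit)` is a Hopf algebra: a bialgebra with an antipode. -/
def IsHopf (mul : A ⊗[k] A →ₗ[k] A) (unit : k →ₗ[k] A)
    (comul : A →ₗ[k] A ⊗[k] A) (counit : A →ₗ[k] k) : Prop :=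
  IsBialgebra k mul unit comul counit
  ∧ ∃ S : A →ₗ[k] A,
      mul ∘ₗ TensorProduct.map S LinearMap.id ∘ₗ comul = unit ∘ₗ counit
      ∧ mul ∘ₗ TensorProduct.map LinearMap.id S ∘ₗ comul = unit ∘ₗ counit

/-- `Γ` is a right inverse of the multiplication which is a bimodule morphism,
witnessing separability of the algebra. -/
def IsSeparableWith (mul : A ⊗[k] A →ₗ[k] A) (Γ : A →ₗ[k] A ⊗[k] A) : Prop :=
  mul ∘ₗ Γ = LinearMap.id
  ∧ Γ ∘ₗ mul ∘ₗ TensorProduct.map LinearMap.id mul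
      = TensorProduct.map mul mul
          ∘ₗ (TensorProduct.assoc k A A (A ⊗[k] A)).symm.toLinearMap
          ∘ₗ TensorProduct.map LinearMap.id (TensorProduct.assoc k A A A).toLinearMap
          ∘ₗ TensorProduct.map LinearMap.id (TensorProduct.map Γ LinearMap.id)

/-- The pairing `β` is associative: `β∘(1⊗∇) = β∘(∇⊗1)`. -/
def PairingAssoc (mul : A ⊗[k] A →ₗ[k] A) (β : A ⊗[k] A →ₗ[k] k) : Prop :=
  β ∘ₗ TensorProduct.map LinearMap.id mul ∘ₗ (TensorProduct.assoc k A A A).toLinearMap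
    = β ∘ₗ TensorProduct.map mul LinearMap.id

/-- The pairing `β` is non-degenerate with co-pairing `α`:
`(1⊗β)∘(α⊗1) = 1_A` under the canonical isomorphisms. -/
def PairingNondeg (β : A ⊗[k] A →ₗ[k] k) (α : k →ₗ[k] A ⊗[k] A) : Prop :=
  (TensorProduct.rid k A).toLinearMap
      ∘ₗ TensorProduct.map LinearMap.id β
      ∘ₗ (TensorProduct.assoc k A A A).toLinearMap
      ∘ₗ TensorProduct.map α LinearMap.id
      ∘ₗ (TensorProduct.lid k A).symm.toLinearMap = LinearMap.id

/-- The pairing `β` is symmetric: `β ∘ σ = β` for the flip `σ`. -/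
def PairingSymm (β : A ⊗[k] A →ₗ[k] k) : Prop :=
  β ∘ₗ (TensorProduct.comm k A A).toLinearMap = β

end Defs

end TTP

/-!
For an algebra with a functional `ε` and associated pairing `β(x ⊗ y) = ε(xy)`, contracting the
second leg of `Δ x` against `y` along `β` should give back the product `xy`. For a unital
associative algebra this one identity is equivalent to the Frobenius axioms: at `x = 1` it makes
`β` nondegenerate, so tensors can be compared after contraction, and there each axiom becomes
associativity or a unit law.

If `τ` is compatible with the counits, the contraction along the pairing of `A ⊗_τ B` factors
through the contractions for `A` and `B`, which gives the identity for `A ⊗_τ B`.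

Compatibility with the comultiplications implies compatibility with the counits. Applying `ε_B` to
the last leg of the hypothesis gives
`(Δ_A ⊗ 1) τ(b ⊗ a) = (1 ⊗ τ)(τ ⊗ 1) (∑ b₁ ⊗ φ(b₂))`, where
`φ(b) = (1 ⊗ 1 ⊗ ε_B) (1 ⊗ τ)(τ ⊗ 1) (b ⊗ Δ_A a)`. At `b = 1` the twists are flips, so
`1 ⊗ Δ_A a = ∑ 1₁ ⊗ φ(1₂)`; pairing the first leg with `ε_B(b ·)` yields `φ(b) = ε_B(b) Δ_A a`.
Applying `1 ⊗ 1 ⊗ ε_B` once more turns this into `Δ_A((1 ⊗ ε_B) τ(b ⊗ a)) = ε_B(b) Δ_A a`, and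
`Δ_A` is injective. The other counit follows by reversing the order of all tensor factors.
-/

namespace TTP

open TensorProduct

section Slice

variable {R M N P Q : Type*} [CommSemiring R]
  [AddCommMonoid M] [Module R M] [AddCommMonoid N] [Module R N]
  [AddCommMonoid P] [Module R P] [AddCommMonoid Q] [Module R Q]

/-- The slice map `1 ⊗ f : M ⊗ N → M` of a functional `f` on `N`. -/
noncomputable def sliceRight (f : Module.Dual R N) : M ⊗[R] N →ₗ[R] M :=
  (TensorProduct.rid R M).toLinearMap ∘ₗ f.lTensor M

/-- The slice map `f ⊗ 1 : M ⊗ N → N` of a functional `f` on `M`. -/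
noncomputable def sliceLeft (f : Module.Dual R M) : M ⊗[R] N →ₗ[R] N :=
  (TensorProduct.lid R N).toLinearMap ∘ₗ f.rTensor N

@[simp]
theorem sliceRight_tmul (f : Module.Dual R N) (m : M) (n : N) :
    sliceRight f (m ⊗ₜ[R] n) = f n • m := by
  simp [sliceRight]

@[simp]
theorem sliceLeft_tmul (f : Module.Dual R M) (m : M) (n : N) :
    sliceLeft f (m ⊗ₜ[R] n) = f m • n := by
  simp [sliceLeft]

theorem sliceRight_map (f : Module.Dual R Q) (g : M →ₗ[R] P) (h : N →ₗ[R] Q) (w : M ⊗[R] N) :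
    sliceRight f (map g h w) = g (sliceRight (f ∘ₗ h) w) := by
  induction w with
  | zero => simp
  | add x y hx hy => simp only [map_add, hx, hy]
  | tmul m n => simp

theorem sliceLeft_map (f : Module.Dual R P) (g : M →ₗ[R] P) (h : N →ₗ[R] Q) (w : M ⊗[R] N) :
    sliceLeft f (map g h w) = h (sliceLeft (f ∘ₗ g) w) := by
  induction w with
  | zero => simp
  | add x y hx hy => simp only [map_add, hx, hy]
  | tmul m n => simp

theorem sliceLeft_comm (f : Module.Dual R N) (w : M ⊗[R] N) :
    sliceLeft f (TensorProduct.comm R M N w) = sliceRight f w := by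
  induction w with
  | zero => simp
  | add x y hx hy => simp only [map_add, hx, hy]
  | tmul m n => simp

theorem sliceRight_comm (f : Module.Dual R M) (w : M ⊗[R] N) :
    sliceRight f (TensorProduct.comm R M N w) = sliceLeft f w := by
  rw [← sliceLeft_comm, TensorProduct.comm_comm]

theorem apply_sliceLeft (f : Module.Dual R M) (g : Module.Dual R N) (w : M ⊗[R] N) :
    g (sliceLeft f w) = f (sliceRight g w) := by
  induction w with
  | zero => simp
  | add x y hx hy => simp only [map_add, hx, hy]
  | tmul m n => simp [mul_comm]

theorem eq_of_sliceRight_eq [Module.Free R N] {w w' : M ⊗[R] N}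
    (h : ∀ f : Module.Dual R N, sliceRight f w = sliceRight f w') : w = w' := by
  refine (equivFinsuppOfBasisRight (Module.Free.chooseBasis R N)).injective ?_
  ext i
  rw [equivFinsuppOfBasisRight_apply, equivFinsuppOfBasisRight_apply]
  exact h ((Module.Free.chooseBasis R N).coord i)

theorem sliceRight_assoc_symm_tmul (f : Module.Dual R N) (q : Q) (w : M ⊗[R] N) :
    sliceRight f ((TensorProduct.assoc R Q M N).symm (q ⊗ₜ w)) = q ⊗ₜ sliceRight f w := by
  induction w with
  | zero => simp
  | add u v hu hv => simp only [map_add, tmul_add, hu, hv]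
  | tmul m n => simp

/-- Contraction of the inner two factors of `M ⊗ N ⊗ P` against a pairing of `N` and `P`, seen
as the map that turns a tensor in `M ⊗ N` into an operator `P → M`. -/
noncomputable def contract (β : N ⊗[R] P →ₗ[R] R) : M ⊗[R] N →ₗ[R] P →ₗ[R] M :=
  curry ((TensorProduct.rid R M).toLinearMap ∘ₗ β.lTensor M ∘ₗ
    (TensorProduct.assoc R M N P).toLinearMap)

@[simp]
theorem contract_tmul (β : N ⊗[R] P →ₗ[R] R) (m : M) (n : N) (p : P) :
    contract β (m ⊗ₜ n) p = β (n ⊗ₜ p) • m := by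
  simp [contract]

theorem contract_apply (β : N ⊗[R] P →ₗ[R] R) (w : M ⊗[R] N) (p : P) :
    contract β w p = sliceRight ((curry β).flip p) w := by
  induction w with
  | zero => simp
  | add x y hx hy => simp only [map_add, LinearMap.add_apply, hx, hy]
  | tmul m n => simp

theorem contract_map_id (β : N ⊗[R] P →ₗ[R] R) (g : M →ₗ[R] Q) (w : M ⊗[R] N) (p : P) :
    contract β (map g LinearMap.id w) p = g (contract β w p) := by
  rw [contract_apply, sliceRight_map, LinearMap.comp_id, contract_apply]

theorem contract_assoc_symm (β : N ⊗[R] P →ₗ[R] R) (q : Q) (w : M ⊗[R] N) (p : P) :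
    contract β ((TensorProduct.assoc R Q M N).symm (q ⊗ₜ w)) p = q ⊗ₜ contract β w p := by
  induction w with
  | zero => simp
  | add x y hx hy => simp only [map_add, tmul_add, LinearMap.add_apply, hx, hy]
  | tmul m n => simp

theorem contract_injective [Module.Free R N] {β : N ⊗[R] P →ₗ[R] R}
    (hβ : Function.Surjective (curry β).flip) :
    Function.Injective (contract (M := M) β) := by
  intro w w' h
  refine eq_of_sliceRight_eq fun f ↦ ?_
  obtain ⟨p, rfl⟩ := hβ f
  rw [← contract_apply, ← contract_apply, h]

theorem finite_of_contract_eq_id {β : N ⊗[R] M →ₗ[R] R} {w : M ⊗[R] N}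
    (hw : contract β w = LinearMap.id) : Module.Finite R M := by
  classical
  obtain ⟨S, rfl⟩ := exists_finset w
  refine ⟨S.image Prod.fst, eq_top_iff.mpr fun x _ ↦ ?_⟩
  have hx : ∑ s ∈ S, β (s.2 ⊗ₜ x) • s.1 = x := by
    simpa [map_sum, LinearMap.sum_apply] using LinearMap.congr_fun hw x
  rw [← hx]
  exact Submodule.sum_mem _ fun s hs ↦ Submodule.smul_mem _ _
    (Submodule.subset_span (Finset.mem_image_of_mem _ hs))

end Slice

section Multiplication

variable {R C : Type*} [CommSemiring R] [AddCommMonoid C] [Module R C]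
  {mul : C ⊗[R] C →ₗ[R] C} {comul : C →ₗ[R] C ⊗[R] C} {counit : C →ₗ[R] R}

theorem sliceRight_map_id_mul_assoc (f : Module.Dual R C) (w : C ⊗[R] C) (y : C) :
    sliceRight f (map LinearMap.id mul (TensorProduct.assoc R C C C (w ⊗ₜ y))) =
      contract (f ∘ₗ mul) w y := by
  induction w with
  | zero => simp
  | add u v hu hv => simp only [map_add, add_tmul, LinearMap.add_apply, hu, hv]
  | tmul u v => simp

theorem contract_map_mul_id_assoc_symm (β : C ⊗[R] C →ₗ[R] R) (w : C ⊗[R] C) (x z : C) :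
    contract β (map mul LinearMap.id ((TensorProduct.assoc R C C C).symm (x ⊗ₜ w))) z =
      mul (x ⊗ₜ contract β w z) := by
  rw [contract_map_id, contract_assoc_symm]

theorem contract_assoc_symm_map_id_comul
    (h : contract (counit ∘ₗ mul) ∘ₗ comul = curry mul) (w : C ⊗[R] C) (z : C) :
    contract (counit ∘ₗ mul) ((TensorProduct.assoc R C C C).symm (map LinearMap.id comul w)) z =
      map LinearMap.id mul (TensorProduct.assoc R C C C (w ⊗ₜ z)) := by
  induction w with
  | zero => simp
  | add u v hu hv => simp only [map_add, add_tmul, LinearMap.add_apply, hu, hv]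
  | tmul u v =>
    have hv : contract (counit ∘ₗ mul) (comul v) z = mul (v ⊗ₜ z) := LinearMap.congr_fun₂ h v z
    simp [contract_assoc_symm, hv]

end Multiplication

section Criterion

variable {k C : Type*} [Field k] [AddCommGroup C] [Module k C]

theorem curry_flip_surjective_of_contract_eq_id {β : C ⊗[k] C →ₗ[k] k} {w : C ⊗[k] C}
    (hw : contract β w = LinearMap.id) : Function.Surjective (curry β).flip := by
  have := finite_of_contract_eq_id hw
  refine (LinearMap.injective_iff_surjective_of_finrank_eq_finrank
    Subspace.dual_finrank_eq.symm).mp fun x y hxy ↦ ?_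
  have hid (z : C) : sliceRight ((curry β).flip z) w = z := by
    rw [← contract_apply, hw, LinearMap.id_apply]
  rw [← hid x, ← hid y, hxy]

variable {mul : C ⊗[k] C →ₗ[k] C} {unit : k →ₗ[k] C}
  {comul : C →ₗ[k] C ⊗[k] C} {counit : C →ₗ[k] k}

theorem IsUnitalAssoc.one_mul (h : IsUnitalAssoc k mul unit) (x : C) :
    mul (unit 1 ⊗ₜ x) = x := by
  simpa using LinearMap.congr_fun h.1 x

theorem IsUnitalAssoc.mul_one (h : IsUnitalAssoc k mul unit) (x : C) :
    mul (x ⊗ₜ unit 1) = x := by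
  simpa using LinearMap.congr_fun h.2.1 x

theorem IsUnitalAssoc.mul_assoc (h : IsUnitalAssoc k mul unit) (x y z : C) :
    mul (mul (x ⊗ₜ y) ⊗ₜ z) = mul (x ⊗ₜ mul (y ⊗ₜ z)) := by
  simpa using LinearMap.congr_fun h.2.2 ((x ⊗ₜ y) ⊗ₜ z)

theorem IsCounitalCoassoc.sliceLeft_comul (h : IsCounitalCoassoc k comul counit) (x : C) :
    sliceLeft counit (comul x) = x :=
  LinearMap.congr_fun h.1 x

theorem IsCounitalCoassoc.sliceRight_comul (h : IsCounitalCoassoc k comul counit) (x : C) :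
    sliceRight counit (comul x) = x :=
  LinearMap.congr_fun h.2.1 x

theorem IsFrobenius.contract_comul (h : IsFrobenius k mul unit comul counit) :
    contract (counit ∘ₗ mul) ∘ₗ comul = curry mul := by
  ext x y
  have hxy := congrArg (sliceRight counit) (LinearMap.congr_fun h.2.2.1 (x ⊗ₜ y))
  simp only [LinearMap.comp_apply, map_tmul, LinearMap.id_apply, LinearEquiv.coe_coe,
    sliceRight_map_id_mul_assoc, h.2.1.sliceRight_comul] at hxy
  simpa using hxy.symm

theorem IsUnitalAssoc.contract_map_id_mul_assoc (hmul : IsUnitalAssoc k mul unit)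
    (f : Module.Dual k C) (w : C ⊗[k] C) (y z : C) :
    contract (f ∘ₗ mul) (map LinearMap.id mul (TensorProduct.assoc k C C C (w ⊗ₜ y))) z =
      contract (f ∘ₗ mul) w (mul (y ⊗ₜ z)) := by
  induction w with
  | zero => simp
  | add u v hu hv => simp only [map_add, add_tmul, LinearMap.add_apply, hu, hv]
  | tmul u v => simp [hmul.mul_assoc]

theorem IsUnitalAssoc.curry_flip_surjective (hmul : IsUnitalAssoc k mul unit)
    (h : contract (counit ∘ₗ mul) ∘ₗ comul = curry mul) :
    Function.Surjective (curry (counit ∘ₗ mul)).flip := by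
  refine curry_flip_surjective_of_contract_eq_id (w := comul (unit 1)) (LinearMap.ext fun x ↦ ?_)
  rw [← LinearMap.comp_apply, h, curry_apply, hmul.one_mul, LinearMap.id_apply]

theorem IsUnitalAssoc.isCounitalCoassoc (hmul : IsUnitalAssoc k mul unit)
    (h : contract (counit ∘ₗ mul) ∘ₗ comul = curry mul)
    (hright : comul ∘ₗ mul = map LinearMap.id mul ∘ₗ (TensorProduct.assoc k C C C).toLinearMap ∘ₗ
      map comul LinearMap.id) :
    IsCounitalCoassoc k comul counit := by
  have hcomul (x y : C) : contract (counit ∘ₗ mul) (comul x) y = mul (x ⊗ₜ y) :=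
    LinearMap.congr_fun₂ h x y
  have hsurj := hmul.curry_flip_surjective h
  have hflip_one : (curry (counit ∘ₗ mul)).flip (unit 1) = counit := by
    ext x
    simp [hmul.mul_one]
  refine ⟨LinearMap.ext fun x ↦ ?_, LinearMap.ext fun x ↦ ?_, LinearMap.ext fun x ↦ ?_⟩
  · change sliceLeft counit (comul x) = x
    refine Module.eval_apply_injective k (LinearMap.ext fun f ↦ ?_)
    obtain ⟨y, rfl⟩ := hsurj f
    rw [Module.Dual.eval_apply, apply_sliceLeft, ← contract_apply, hcomul]
    rfl
  · change sliceRight counit (comul x) = x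
    rw [← hflip_one, ← contract_apply, hcomul, hmul.mul_one]
  · refine contract_injective hsurj (LinearMap.ext fun y ↦ ?_)
    simp only [LinearMap.comp_apply, LinearEquiv.coe_coe, contract_map_id, hcomul,
      contract_assoc_symm_map_id_comul h]
    exact LinearMap.congr_fun hright (x ⊗ₜ y)

theorem IsUnitalAssoc.isFrobenius_of_contract_comul (hmul : IsUnitalAssoc k mul unit)
    (h : contract (counit ∘ₗ mul) ∘ₗ comul = curry mul) :
    IsFrobenius k mul unit comul counit := by
  have hsurj := hmul.curry_flip_surjective h
  have hcomul (x y : C) : contract (counit ∘ₗ mul) (comul x) y = mul (x ⊗ₜ y) :=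
    LinearMap.congr_fun₂ h x y
  have hright : comul ∘ₗ mul = map LinearMap.id mul ∘ₗ
      (TensorProduct.assoc k C C C).toLinearMap ∘ₗ map comul LinearMap.id := by
    refine TensorProduct.ext' fun x y ↦ contract_injective hsurj (LinearMap.ext fun z ↦ ?_)
    simp only [LinearMap.comp_apply, map_tmul, LinearMap.id_apply, LinearEquiv.coe_coe,
      hmul.contract_map_id_mul_assoc, hcomul, hmul.mul_assoc]
  have hleft : comul ∘ₗ mul = map mul LinearMap.id ∘ₗ
      (TensorProduct.assoc k C C C).symm.toLinearMap ∘ₗ map LinearMap.id comul := by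
    refine TensorProduct.ext' fun x y ↦ contract_injective hsurj (LinearMap.ext fun z ↦ ?_)
    simp only [LinearMap.comp_apply, map_tmul, LinearMap.id_apply, LinearEquiv.coe_coe,
      contract_map_mul_id_assoc_symm, hcomul, hmul.mul_assoc]
  exact ⟨hmul, hmul.isCounitalCoassoc h hright, hright, hleft⟩

end Criterion

section MidMap

variable {k X P Q Y R S : Type*} [Field k]
  [AddCommGroup X] [Module k X] [AddCommGroup P] [Module k P]
  [AddCommGroup Q] [Module k Q] [AddCommGroup Y] [Module k Y]
  [AddCommGroup R] [Module k R] [AddCommGroup S] [Module k S]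

theorem midMap_tmul (f : P ⊗[k] Q →ₗ[k] R ⊗[k] S) (x : X) (p : P) (q : Q) (y : Y) :
    midMap k f ((x ⊗ₜ p) ⊗ₜ (q ⊗ₜ y)) =
      map (mk k X R x) ((mk k S Y).flip y) (f (p ⊗ₜ q)) := by
  simp only [midMap, LinearMap.comp_apply, LinearEquiv.coe_coe, assoc_symm_tmul, map_tmul,
    assoc_tmul, LinearMap.id_apply]
  induction f (p ⊗ₜ q) with
  | zero => simp
  | add u v hu hv => simp only [map_add, tmul_add, add_tmul, hu, hv]
  | tmul r s => simp

end MidMap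

section OneSidedMul

variable {R A B : Type*} [CommSemiring R] [AddCommMonoid A] [Module R A]
  [AddCommMonoid B] [Module R B]

/-- Multiplication by `a` on the left of the first factor of `A ⊗ B`. -/
noncomputable def leftMul (mulA : A ⊗[R] A →ₗ[R] A) (a : A) : A ⊗[R] B →ₗ[R] A ⊗[R] B :=
  map (curry mulA a) LinearMap.id

/-- Multiplication by `b` on the right of the second factor of `A ⊗ B`. -/
noncomputable def rightMul (mulB : B ⊗[R] B →ₗ[R] B) (b : B) : A ⊗[R] B →ₗ[R] A ⊗[R] B :=
  map LinearMap.id ((curry mulB).flip b)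

variable {mulA : A ⊗[R] A →ₗ[R] A} {mulB : B ⊗[R] B →ₗ[R] B}

@[simp]
theorem leftMul_tmul (a a' : A) (b : B) :
    leftMul mulA a (a' ⊗ₜ[R] b) = mulA (a ⊗ₜ a') ⊗ₜ b :=
  rfl

@[simp]
theorem rightMul_tmul (a : A) (b b' : B) :
    rightMul mulB b' (a ⊗ₜ[R] b) = a ⊗ₜ mulB (b ⊗ₜ b') :=
  rfl

theorem leftMul_rightMul (a : A) (b : B) (w : A ⊗[R] B) :
    leftMul mulA a (rightMul mulB b w) = rightMul mulB b (leftMul mulA a w) := by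
  induction w with
  | zero => simp
  | add u v hu hv => simp only [map_add, hu, hv]
  | tmul a' b' => rfl

theorem sliceRight_leftMul (f : Module.Dual R B) (a : A) (w : A ⊗[R] B) :
    sliceRight f (leftMul mulA a w) = mulA (a ⊗ₜ sliceRight f w) :=
  sliceRight_map f _ _ w

theorem tmul_sliceLeft_leftMul (f : Module.Dual R A) (a a' : A) (w : A ⊗[R] B) :
    a ⊗ₜ[R] sliceLeft f (leftMul mulA a' w) =
      map (contract (f ∘ₗ mulA) (a ⊗ₜ a')) LinearMap.id w := by
  induction w with
  | zero => simp
  | add u v hu hv => simp only [map_add, tmul_add, hu, hv]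
  | tmul a'' b => simp [smul_tmul']

end OneSidedMul

section TwistedAlgebra

variable {k A B : Type*} [Field k] [AddCommGroup A] [Module k A] [AddCommGroup B] [Module k B]
  {mulA : A ⊗[k] A →ₗ[k] A} {unitA : k →ₗ[k] A} {mulB : B ⊗[k] B →ₗ[k] B}
  {unitB : k →ₗ[k] B} {τ : B ⊗[k] A →ₗ[k] A ⊗[k] B}

theorem IsUnitalAssoc.leftMul_leftMul (hA : IsUnitalAssoc k mulA unitA) (a a' : A)
    (w : A ⊗[k] B) : leftMul mulA a (leftMul mulA a' w) = leftMul mulA (mulA (a ⊗ₜ a')) w := by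
  induction w with
  | zero => simp
  | add u v hu hv => simp only [map_add, hu, hv]
  | tmul a'' b => simp [hA.mul_assoc]

theorem IsUnitalAssoc.rightMul_rightMul (hB : IsUnitalAssoc k mulB unitB) (b b' : B)
    (w : A ⊗[k] B) : rightMul mulB b' (rightMul mulB b w) = rightMul mulB (mulB (b ⊗ₜ b')) w := by
  induction w with
  | zero => simp
  | add u v hu hv => simp only [map_add, hu, hv]
  | tmul a b'' => simp [hB.mul_assoc]

theorem IsUnitalAssoc.leftMul_one (hA : IsUnitalAssoc k mulA unitA) (w : A ⊗[k] B) :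
    leftMul mulA (unitA 1) w = w := by
  induction w with
  | zero => simp
  | add u v hu hv => simp only [map_add, hu, hv]
  | tmul a b => simp [hA.one_mul]

theorem IsUnitalAssoc.rightMul_one (hB : IsUnitalAssoc k mulB unitB) (w : A ⊗[k] B) :
    rightMul mulB (unitB 1) w = w := by
  induction w with
  | zero => simp
  | add u v hu hv => simp only [map_add, hu, hv]
  | tmul a b => simp [hB.mul_one]

local notation:70 u:70 "⋆" v:71 => tMul k mulA mulB τ (u ⊗ₜ[k] v)

theorem tMul_tmul (a a' : A) (b b' : B) :
    (a ⊗ₜ b) ⋆ (a' ⊗ₜ b') = leftMul mulA a (rightMul mulB b' (τ (b ⊗ₜ a'))) := by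
  rw [tMul, LinearMap.comp_apply, midMap_tmul]
  induction τ (b ⊗ₜ a') with
  | zero => simp
  | add u v hu hv => simp only [map_add, hu, hv]
  | tmul a'' b'' => simp

theorem IsUnitalAssoc.leftMul_tMul (hA : IsUnitalAssoc k mulA unitA) (a : A)
    (u v : A ⊗[k] B) : leftMul mulA a u ⋆ v = leftMul mulA a (u ⋆ v) := by
  induction u with
  | zero => simp
  | add u u' hu hu' => simp only [map_add, add_tmul, hu, hu']
  | tmul a' b' =>
    induction v with
    | zero => simp
    | add v v' hv hv' => simp only [map_add, tmul_add, hv, hv']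
    | tmul a'' b'' => rw [leftMul_tmul, tMul_tmul, tMul_tmul, hA.leftMul_leftMul]

theorem IsUnitalAssoc.tMul_rightMul (hB : IsUnitalAssoc k mulB unitB) (b : B)
    (u v : A ⊗[k] B) : u ⋆ rightMul mulB b v = rightMul mulB b (u ⋆ v) := by
  induction u with
  | zero => simp
  | add u u' hu hu' => simp only [map_add, add_tmul, hu, hu']
  | tmul a' b' =>
    induction v with
    | zero => simp
    | add v v' hv hv' => simp only [map_add, tmul_add, hv, hv']
    | tmul a'' b'' =>
      rw [rightMul_tmul, tMul_tmul, tMul_tmul, ← leftMul_rightMul, hB.rightMul_rightMul]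

theorem IsTwisting.apply_tmul_one (hτ : IsTwisting k mulA unitA mulB unitB τ) (b : B) :
    τ (b ⊗ₜ unitA 1) = unitA 1 ⊗ₜ b := by
  simpa using LinearMap.congr_fun hτ.1 (b ⊗ₜ 1)

theorem IsTwisting.apply_one_tmul (hτ : IsTwisting k mulA unitA mulB unitB τ) (a : A) :
    τ (unitB 1 ⊗ₜ a) = a ⊗ₜ unitB 1 := by
  simpa using LinearMap.congr_fun hτ.2.1 (1 ⊗ₜ a)

theorem IsTwisting.apply_mul_tmul (hτ : IsTwisting k mulA unitA mulB unitB τ)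
    (hA : IsUnitalAssoc k mulA unitA) (b b' : B) (a : A) :
    τ (mulB (b ⊗ₜ b') ⊗ₜ a) = (unitA 1 ⊗ₜ b) ⋆ τ (b' ⊗ₜ a) := by
  have h := LinearMap.congr_fun hτ.2.2 ((b ⊗ₜ b') ⊗ₜ (unitA 1 ⊗ₜ a))
  simpa [tMul, midMap_tmul, hτ.apply_tmul_one, hA.one_mul] using h

theorem IsTwisting.apply_tmul_mul (hτ : IsTwisting k mulA unitA mulB unitB τ)
    (hB : IsUnitalAssoc k mulB unitB) (b : B) (a a' : A) :
    τ (b ⊗ₜ mulA (a ⊗ₜ a')) = τ (b ⊗ₜ a) ⋆ (a' ⊗ₜ unitB 1) := by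
  have h := LinearMap.congr_fun hτ.2.2 ((b ⊗ₜ unitB 1) ⊗ₜ (a ⊗ₜ a'))
  simpa [tMul, midMap_tmul, hτ.apply_one_tmul, hB.mul_one] using h

theorem IsTwisting.rightMul_tMul (hτ : IsTwisting k mulA unitA mulB unitB τ)
    (hA : IsUnitalAssoc k mulA unitA) (hB : IsUnitalAssoc k mulB unitB)
    (u : A ⊗[k] B) (b : B) (a : A) :
    rightMul mulB b u ⋆ (a ⊗ₜ unitB 1) = u ⋆ τ (b ⊗ₜ a) := by
  induction u with
  | zero => simp
  | add u v hu hv => simp only [map_add, add_tmul, hu, hv]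
  | tmul a' b' =>
    have hfactor : a' ⊗ₜ[k] b' = leftMul mulA a' (unitA 1 ⊗ₜ b') := by rw [leftMul_tmul, hA.mul_one]
    rw [rightMul_tmul, tMul_tmul, hB.rightMul_one, hτ.apply_mul_tmul hA, hfactor, hA.leftMul_tMul]

theorem IsTwisting.tMul_leftMul (hτ : IsTwisting k mulA unitA mulB unitB τ)
    (hA : IsUnitalAssoc k mulA unitA) (hB : IsUnitalAssoc k mulB unitB)
    (b : B) (a : A) (v : A ⊗[k] B) :
    (unitA 1 ⊗ₜ b) ⋆ leftMul mulA a v = τ (b ⊗ₜ a) ⋆ v := by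
  induction v with
  | zero => simp
  | add u v hu hv => simp only [map_add, tmul_add, hu, hv]
  | tmul a' b' =>
    have hfactor : a' ⊗ₜ[k] b' = rightMul mulB b' (a' ⊗ₜ unitB 1) := by
      rw [rightMul_tmul, hB.one_mul]
    rw [leftMul_tmul, tMul_tmul, hA.leftMul_one, hτ.apply_tmul_mul hB, hfactor, hB.tMul_rightMul]

theorem IsTwisting.tMul_assoc (hτ : IsTwisting k mulA unitA mulB unitB τ)
    (hA : IsUnitalAssoc k mulA unitA) (hB : IsUnitalAssoc k mulB unitB)
    (a a' a'' : A) (b b' b'' : B) :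
    (a ⊗ₜ b) ⋆ (a' ⊗ₜ b') ⋆ (a'' ⊗ₜ b'') = (a ⊗ₜ b) ⋆ ((a' ⊗ₜ b') ⋆ (a'' ⊗ₜ b'')) := by
  have hfst : a ⊗ₜ[k] b = leftMul mulA a (unitA 1 ⊗ₜ b) := by rw [leftMul_tmul, hA.mul_one]
  have hsnd : a'' ⊗ₜ[k] b'' = rightMul mulB b'' (a'' ⊗ₜ unitB 1) := by
    rw [rightMul_tmul, hB.one_mul]
  calc
    (a ⊗ₜ b) ⋆ (a' ⊗ₜ b') ⋆ (a'' ⊗ₜ b'') =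
        leftMul mulA a (rightMul mulB b'' (τ (b ⊗ₜ a') ⋆ τ (b' ⊗ₜ a''))) := by
      rw [hsnd, hB.tMul_rightMul, tMul_tmul, hA.leftMul_tMul, hτ.rightMul_tMul hA hB,
        leftMul_rightMul]
    _ = (a ⊗ₜ b) ⋆ ((a' ⊗ₜ b') ⋆ (a'' ⊗ₜ b'')) := by
      rw [hfst, hA.leftMul_tMul, tMul_tmul, hτ.tMul_leftMul hA hB, hB.tMul_rightMul]

theorem IsTwisting.isUnitalAssoc_tMul (hτ : IsTwisting k mulA unitA mulB unitB τ)
    (hA : IsUnitalAssoc k mulA unitA) (hB : IsUnitalAssoc k mulB unitB) :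
    IsUnitalAssoc k (tMul k mulA mulB τ) (tUnit k unitA unitB) := by
  refine ⟨?_, ?_, ?_⟩
  · ext a b
    simp [tUnit, tMul_tmul, hτ.apply_one_tmul, hA.one_mul, hB.one_mul]
  · ext a b
    simp [tUnit, tMul_tmul, hτ.apply_tmul_one, hA.mul_one, hB.mul_one]
  · ext a b a' b' a'' b''
    simp [hτ.tMul_assoc hA hB]

end TwistedAlgebra

section CounitCompat

variable {k A B : Type*} [Field k] [AddCommGroup A] [Module k A] [AddCommGroup B] [Module k B]
  {mulA : A ⊗[k] A →ₗ[k] A} {unitA : k →ₗ[k] A} {comulA : A →ₗ[k] A ⊗[k] A} {counitA : A →ₗ[k] k}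
  {mulB : B ⊗[k] B →ₗ[k] B} {unitB : k →ₗ[k] B} {comulB : B →ₗ[k] B ⊗[k] B} {counitB : B →ₗ[k] k}

theorem counitCompat_iff {τ : B ⊗[k] A →ₗ[k] A ⊗[k] B} :
    CounitCompat k counitA counitB τ ↔
      (∀ b a, sliceLeft counitA (τ (b ⊗ₜ a)) = counitA a • b) ∧
        ∀ b a, sliceRight counitB (τ (b ⊗ₜ a)) = counitB b • a := by
  refine and_congr ⟨fun h b a ↦ ?_, fun h ↦ TensorProduct.ext' fun b a ↦ ?_⟩
    ⟨fun h b a ↦ ?_, fun h ↦ TensorProduct.ext' fun b a ↦ ?_⟩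
  · exact (congrArg (TensorProduct.lid k B) (LinearMap.congr_fun h (b ⊗ₜ a))).trans (by simp)
  · exact (TensorProduct.lid k B).injective ((h b a).trans (by simp))
  · exact (congrArg (TensorProduct.rid k A) (LinearMap.congr_fun h (b ⊗ₜ a))).trans (by simp)
  · exact (TensorProduct.rid k A).injective ((h b a).trans (by simp))

theorem tCounit_eq (w : A ⊗[k] B) :
    tCounit k counitA counitB w = counitA (sliceRight counitB w) := by
  induction w with
  | zero => simp
  | add u v hu hv => simp only [map_add, hu, hv]
  | tmul a b => simp [tCounit, mul_comm]

theorem IsTwisting.tmul_tMul {τ : B ⊗[k] A →ₗ[k] A ⊗[k] B}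
    (hτ : IsTwisting k mulA unitA mulB unitB τ)
    (hA : IsUnitalAssoc k mulA unitA) (hB : IsUnitalAssoc k mulB unitB) (a a' : A) (b b' : B) :
    tMul k mulA mulB τ ((a ⊗ₜ b) ⊗ₜ τ (b' ⊗ₜ a')) =
      leftMul mulA a (τ (mulB (b ⊗ₜ b') ⊗ₜ a')) := by
  rw [← hτ.rightMul_tMul hA hB, rightMul_tmul, tMul_tmul, hB.rightMul_one]

theorem CounitCompat.tCounit_tMul {τ : B ⊗[k] A →ₗ[k] A ⊗[k] B}
    (hε : CounitCompat k counitA counitB τ)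
    (hτ : IsTwisting k mulA unitA mulB unitB τ)
    (hA : IsUnitalAssoc k mulA unitA) (hB : IsUnitalAssoc k mulB unitB) (a a' : A) (b b' : B) :
    tCounit k counitA counitB (tMul k mulA mulB τ ((a ⊗ₜ b) ⊗ₜ τ (b' ⊗ₜ a'))) =
      counitA (mulA (a ⊗ₜ a')) * counitB (mulB (b ⊗ₜ b')) := by
  rw [hτ.tmul_tMul hA hB, tCounit_eq, sliceRight_leftMul, (counitCompat_iff.mp hε).2]
  simp [mul_comm]

theorem CounitCompat.sliceRight_counit_mul {τ : B ⊗[k] A →ₗ[k] A ⊗[k] B}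
    (hε : CounitCompat k counitA counitB τ)
    (hτ : IsTwisting k mulA unitA mulB unitB τ)
    (hB : IsUnitalAssoc k mulB unitB) (w : B ⊗[k] A) (a : A) :
    sliceRight ((curry (counitA ∘ₗ mulA)).flip a) w =
      sliceLeft counitA (tMul k mulA mulB τ (τ w ⊗ₜ (a ⊗ₜ unitB 1))) := by
  induction w with
  | zero => simp
  | add u v hu hv => simp only [map_add, add_tmul, hu, hv]
  | tmul b a' => rw [← hτ.apply_tmul_mul hB, (counitCompat_iff.mp hε).1]; simp

theorem CounitCompat.contract_map_mk {τ : B ⊗[k] A →ₗ[k] A ⊗[k] B}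
    (hε : CounitCompat k counitA counitB τ)
    (hτ : IsTwisting k mulA unitA mulB unitB τ)
    (hA : IsUnitalAssoc k mulA unitA) (hB : IsUnitalAssoc k mulB unitB)
    (a a' : A) (b b' : B) (w : B ⊗[k] A) :
    contract (tCounit k counitA counitB ∘ₗ tMul k mulA mulB τ)
        (map (mk k A B a) ((mk k A B).flip b) w) (τ (b' ⊗ₜ a')) =
      counitB (mulB (b ⊗ₜ b')) •
        (a ⊗ₜ sliceLeft counitA (tMul k mulA mulB τ (τ w ⊗ₜ (a' ⊗ₜ unitB 1)))) := by
  rw [← hε.sliceRight_counit_mul hτ hB]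
  induction w with
  | zero => simp
  | add u v hu hv => simp only [map_add, LinearMap.add_apply, tmul_add, smul_add, hu, hv]
  | tmul b'' a'' =>
    simp [hε.tCounit_tMul hτ hA hB, smul_smul, mul_comm]

theorem CounitCompat.contract_midMap_symm {τ : B ⊗[k] A ≃ₗ[k] A ⊗[k] B}
    (hε : CounitCompat k counitA counitB τ.toLinearMap)
    (hτ : IsTwisting k mulA unitA mulB unitB τ.toLinearMap)
    (hA : IsUnitalAssoc k mulA unitA) (hB : IsUnitalAssoc k mulB unitB)
    (m : A ⊗[k] A) (n : B ⊗[k] B) (a : A) (b : B) :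
    contract (tCounit k counitA counitB ∘ₗ tMul k mulA mulB τ.toLinearMap)
        (midMap k τ.symm.toLinearMap (m ⊗ₜ n)) (τ.toLinearMap (b ⊗ₜ a)) =
      map (contract (counitA ∘ₗ mulA) m) LinearMap.id
        (τ.toLinearMap (contract (counitB ∘ₗ mulB) n b ⊗ₜ a)) := by
  induction m with
  | zero => simp
  | add m m' hm hm' => simp only [map_add, add_tmul, map_add_left, LinearMap.add_apply, hm, hm']
  | tmul a₁ a₂ =>
    induction n with
    | zero => simp
    | add n n' hn hn' => simp only [map_add, add_tmul, tmul_add, LinearMap.add_apply, hn, hn']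
    | tmul b₁ b₂ =>
      rw [midMap_tmul, hε.contract_map_mk hτ hA hB, LinearEquiv.coe_coe τ.symm,
        LinearEquiv.coe_coe τ, τ.apply_symm_apply, tMul_tmul, hB.rightMul_one,
        tmul_sliceLeft_leftMul, contract_tmul, ← smul_tmul', map_smul, map_smul]
      rfl

theorem isFrobenius_of_counitCompat {τ : B ⊗[k] A ≃ₗ[k] A ⊗[k] B}
    (hε : CounitCompat k counitA counitB τ.toLinearMap)
    (hτ : IsTwisting k mulA unitA mulB unitB τ.toLinearMap)
    (hA : IsFrobenius k mulA unitA comulA counitA) (hB : IsFrobenius k mulB unitB comulB counitB) :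
    IsFrobenius k (tMul k mulA mulB τ.toLinearMap) (tUnit k unitA unitB)
      (tComul k comulA comulB τ.symm.toLinearMap) (tCounit k counitA counitB) := by
  refine (hτ.isUnitalAssoc_tMul hA.1 hB.1).isFrobenius_of_contract_comul ?_
  refine TensorProduct.ext' fun a b ↦ ?_
  rw [← LinearMap.cancel_right τ.surjective]
  refine TensorProduct.ext' fun b' a' ↦ ?_
  have hcomulA : contract (counitA ∘ₗ mulA) (comulA a) = curry mulA a :=
    LinearMap.congr_fun hA.contract_comul a
  have hcomulB : contract (counitB ∘ₗ mulB) (comulB b) b' = mulB (b ⊗ₜ b') :=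
    LinearMap.congr_fun₂ hB.contract_comul b b'
  have h := hε.contract_midMap_symm hτ hA.1 hB.1 (comulA a) (comulB b) a' b'
  rw [hcomulA, hcomulB] at h
  exact h.trans (hτ.tmul_tMul hA.1 hB.1 a a' b b').symm

end CounitCompat

section Twist

variable {R A B X P Q Y M N : Type*} [CommSemiring R] [AddCommMonoid A] [Module R A]
  [AddCommMonoid B] [Module R B] [AddCommMonoid X] [Module R X] [AddCommMonoid P] [Module R P]
  [AddCommMonoid Q] [Module R Q] [AddCommMonoid Y] [Module R Y]
  [AddCommMonoid M] [Module R M] [AddCommMonoid N] [Module R N]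

/-- The isomorphism `1_X ⊗ τ`, seen as exchanging the last two factors of `X ⊗ B ⊗ A`. -/
noncomputable def twistLast (X : Type*) [AddCommMonoid X] [Module R X]
    (τ : B ⊗[R] A ≃ₗ[R] A ⊗[R] B) : (X ⊗[R] B) ⊗[R] A ≃ₗ[R] (X ⊗[R] A) ⊗[R] B :=
  TensorProduct.assoc R X B A ≪≫ₗ τ.lTensor X ≪≫ₗ (TensorProduct.assoc R X A B).symm

/-- The isomorphism `(1_A ⊗ τ) ∘ (τ ⊗ 1_A)` that moves `B` past two copies of `A`. -/
noncomputable def twistPair (τ : B ⊗[R] A ≃ₗ[R] A ⊗[R] B) :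
    B ⊗[R] (A ⊗[R] A) ≃ₗ[R] (A ⊗[R] A) ⊗[R] B :=
  (TensorProduct.assoc R B A A).symm ≪≫ₗ τ.rTensor A ≪≫ₗ twistLast A τ

/-- The map `b ↦ (1_A ⊗ 1_A ⊗ f) (twistPair τ (b ⊗ m))`. -/
noncomputable def sliceTwist (f : Module.Dual R B) (τ : B ⊗[R] A ≃ₗ[R] A ⊗[R] B) (m : A ⊗[R] A) :
    B →ₗ[R] A ⊗[R] A :=
  sliceRight f ∘ₗ (twistPair τ).toLinearMap ∘ₗ (mk R B (A ⊗[R] A)).flip m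

variable {τ : B ⊗[R] A ≃ₗ[R] A ⊗[R] B}

theorem twistPair_tmul (b : B) (a a' : A) :
    twistPair τ (b ⊗ₜ (a ⊗ₜ a')) = twistLast A τ (τ (b ⊗ₜ a) ⊗ₜ a') := by
  simp [twistPair]

theorem twistLast_tmul (x : X) (b : B) (a : A) :
    twistLast X τ ((x ⊗ₜ b) ⊗ₜ a) = (TensorProduct.assoc R X A B).symm (x ⊗ₜ τ (b ⊗ₜ a)) := by
  simp [twistLast]

theorem twistPair_tmul_of_forall_apply {u : B} (hu : ∀ a, τ (u ⊗ₜ a) = a ⊗ₜ u) (m : A ⊗[R] A) :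
    twistPair τ (u ⊗ₜ m) = m ⊗ₜ u := by
  induction m with
  | zero => simp
  | add m m' hm hm' => simp only [tmul_add, add_tmul, map_add, hm, hm']
  | tmul a a' => simp [twistPair_tmul, twistLast_tmul, hu]

/-- The isomorphism `A ⊗ B ≃ B ⊗ A` obtained from `τ` by reversing the order of the factors. -/
noncomputable def mirror (τ : B ⊗[R] A ≃ₗ[R] A ⊗[R] B) : A ⊗[R] B ≃ₗ[R] B ⊗[R] A :=
  TensorProduct.comm R A B ≪≫ₗ τ ≪≫ₗ TensorProduct.comm R A B

theorem mirror_comm (w : B ⊗[R] A) :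
    mirror τ (TensorProduct.comm R B A w) = TensorProduct.comm R A B (τ w) := by
  simp [mirror]

theorem mirror_tmul (a : A) (b : B) :
    mirror τ (a ⊗ₜ b) = TensorProduct.comm R A B (τ (b ⊗ₜ a)) := by
  simp [mirror]

/-- The reversal `x ⊗ p ⊗ q ⊗ y ↦ y ⊗ q ⊗ p ⊗ x`. -/
noncomputable def reverse :
    (X ⊗[R] P) ⊗[R] (Q ⊗[R] Y) →ₗ[R] (Y ⊗[R] Q) ⊗[R] (P ⊗[R] X) :=
  (TensorProduct.comm R (P ⊗[R] X) (Y ⊗[R] Q)).toLinearMap ∘ₗ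
    map (TensorProduct.comm R X P).toLinearMap (TensorProduct.comm R Q Y).toLinearMap

theorem reverse_tmul (u : X ⊗[R] P) (v : Q ⊗[R] Y) :
    reverse (u ⊗ₜ[R] v) = TensorProduct.comm R Q Y v ⊗ₜ TensorProduct.comm R X P u :=
  rfl

theorem map_mirror_reverse (w : (B ⊗[R] A) ⊗[R] (B ⊗[R] A)) :
    map (mirror τ).toLinearMap (mirror τ).toLinearMap (reverse w) =
      reverse (map τ.toLinearMap τ.toLinearMap w) := by
  induction w with
  | zero => simp
  | add w w' hw hw' => simp only [map_add, hw, hw']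
  | tmul u v => simp [reverse_tmul, mirror_comm]

theorem reverse_map (f : M →ₗ[R] X ⊗[R] P) (g : N →ₗ[R] Q ⊗[R] Y) (w : M ⊗[R] N) :
    reverse (map f g w) = map ((TensorProduct.comm R Q Y).toLinearMap ∘ₗ g)
      ((TensorProduct.comm R X P).toLinearMap ∘ₗ f) (TensorProduct.comm R M N w) := by
  induction w with
  | zero => simp
  | add w w' hw hw' => simp only [map_add, hw, hw']
  | tmul x p => simp [reverse_tmul]

end Twist

section ComulCompat

variable {k A B : Type*} [Field k] [AddCommGroup A] [Module k A] [AddCommGroup B] [Module k B]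
  {comulA : A →ₗ[k] A ⊗[k] A} {comulB : B →ₗ[k] B ⊗[k] B} {counitB : B →ₗ[k] k}
  {τ : B ⊗[k] A ≃ₗ[k] A ⊗[k] B}

theorem lTensor_sliceRight_midMap (f : Module.Dual k B) (u v : A ⊗[k] B) :
    (sliceRight f).lTensor (A ⊗[k] A) (midMap k τ.toLinearMap (u ⊗ₜ v)) =
      twistLast A τ (u ⊗ₜ sliceRight f v) := by
  induction u with
  | zero => simp
  | add u u' hu hu' => simp only [map_add, add_tmul, hu, hu']
  | tmul a b =>
    induction v with
    | zero => simp
    | add v v' hv hv' => simp only [map_add, tmul_add, hv, hv']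
    | tmul a' b' =>
      rw [midMap_tmul, sliceRight_tmul, tmul_smul, map_smul, twistLast_tmul, LinearEquiv.coe_coe]
      induction τ (b ⊗ₜ a') with
      | zero => simp
      | add w w' hw hw' => simp only [map_add, tmul_add, smul_add, hw, hw']
      | tmul a'' b'' => simp

theorem lTensor_sliceRight_twist (f : Module.Dual k B) (w : B ⊗[k] B) (m : A ⊗[k] A) :
    (sliceRight f).lTensor (A ⊗[k] A) (midMap k τ.toLinearMap
        (map τ.toLinearMap τ.toLinearMap (midMap k τ.toLinearMap (w ⊗ₜ m)))) =
      twistPair τ ((sliceTwist f τ m).lTensor B w) := by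
  induction w with
  | zero => simp
  | add w w' hw hw' => simp only [map_add, add_tmul, hw, hw']
  | tmul b b' =>
    induction m with
    | zero => simp [sliceTwist]
    | add m m' hm hm' =>
      have hadd : sliceTwist f τ (m + m') = sliceTwist f τ m + sliceTwist f τ m' := by
        simp only [sliceTwist, map_add, LinearMap.comp_add]
      simp only [map_add, tmul_add, hm, hm', hadd, LinearMap.lTensor_add, LinearMap.add_apply]
    | tmul a a' =>
      have hslice : sliceTwist f τ (a ⊗ₜ a') b' =
          sliceRight f (twistLast A τ (τ (b' ⊗ₜ a) ⊗ₜ a')) := by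
        rw [← twistPair_tmul]
        rfl
      rw [midMap_tmul, LinearMap.lTensor_tmul, hslice, LinearEquiv.coe_coe]
      induction τ (b' ⊗ₜ a) with
      | zero => simp
      | add u v hu hv => simp only [map_add, add_tmul, tmul_add, hu, hv]
      | tmul a'' b'' =>
        rw [map_tmul, map_tmul, lTensor_sliceRight_midMap, twistLast_tmul,
          sliceRight_assoc_symm_tmul, twistPair_tmul]
        rfl

theorem ComulCompat.map_comul_id_apply (hcompat : ComulCompat k comulA comulB τ.toLinearMap)
    (hcounit : ∀ b, sliceRight counitB (comulB b) = b) (b : B) (a : A) :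
    map comulA LinearMap.id (τ (b ⊗ₜ a)) =
      twistPair τ ((sliceTwist counitB τ (comulA a)).lTensor B (comulB b)) := by
  have hcounit' : sliceRight counitB ∘ₗ comulB = LinearMap.id := LinearMap.ext hcounit
  have h := congrArg ((sliceRight counitB).lTensor (A ⊗[k] A))
    (LinearMap.congr_fun hcompat (b ⊗ₜ a))
  simp only [LinearMap.comp_apply, map_tmul, lTensor_sliceRight_twist] at h
  rw [← h, ← hcounit', ← LinearMap.lTensor_comp_map]
  rfl

theorem ComulCompat.sliceTwist_comul (hcompat : ComulCompat k comulA comulB τ.toLinearMap)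
    (hcounit : ∀ b, sliceRight counitB (comulB b) = b)
    {u : B} (hu : ∀ a, τ (u ⊗ₜ a) = a ⊗ₜ u)
    (hdual : ∀ b, ∃ f : Module.Dual k B, f u = counitB b ∧ sliceLeft f (comulB u) = b)
    (b : B) (a : A) : sliceTwist counitB τ (comulA a) b = counitB b • comulA a := by
  have hslide : u ⊗ₜ comulA a = (sliceTwist counitB τ (comulA a)).lTensor B (comulB u) := by
    apply (twistPair τ).injective
    rw [← hcompat.map_comul_id_apply hcounit, hu, twistPair_tmul_of_forall_apply hu, map_tmul,
      LinearMap.id_apply]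
  obtain ⟨f, hfu, hfb⟩ := hdual b
  have h := congrArg (sliceLeft f) hslide
  rw [sliceLeft_tmul, hfu, LinearMap.lTensor, sliceLeft_map, LinearMap.comp_id, hfb] at h
  exact h.symm

theorem ComulCompat.sliceRight_apply_tmul (hcompat : ComulCompat k comulA comulB τ.toLinearMap)
    (hinj : Function.Injective comulA)
    (hcounit : ∀ b, sliceRight counitB (comulB b) = b)
    {u : B} (hu : ∀ a, τ (u ⊗ₜ a) = a ⊗ₜ u)
    (hdual : ∀ b, ∃ f : Module.Dual k B, f u = counitB b ∧ sliceLeft f (comulB u) = b)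
    (b : B) (a : A) : sliceRight counitB (τ (b ⊗ₜ a)) = counitB b • a := by
  have hφ (b' : B) := hcompat.sliceTwist_comul hcounit hu hdual b' a
  have hcollapse (w : B ⊗[k] B) : (sliceTwist counitB τ (comulA a)).lTensor B w =
      sliceRight counitB w ⊗ₜ comulA a := by
    induction w with
    | zero => simp
    | add u v hu hv => simp only [map_add, add_tmul, hu, hv]
    | tmul b' b'' => simp [hφ, smul_tmul']
  apply hinj
  calc
    comulA (sliceRight counitB (τ (b ⊗ₜ a))) =
        sliceRight counitB (map comulA LinearMap.id (τ (b ⊗ₜ a))) := by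
      rw [sliceRight_map, LinearMap.comp_id]
    _ = sliceTwist counitB τ (comulA a) b := by
      rw [hcompat.map_comul_id_apply hcounit, hcollapse, hcounit]
      rfl
    _ = comulA (counitB b • a) := by rw [hφ, map_smul]

theorem midMap_mirror_reverse {X Y : Type*} [AddCommGroup X] [Module k X] [AddCommGroup Y]
    [Module k Y] (w : (X ⊗[k] B) ⊗[k] (A ⊗[k] Y)) :
    midMap k (mirror τ).toLinearMap (reverse w) = reverse (midMap k τ.toLinearMap w) := by
  suffices midMap k (mirror τ).toLinearMap ∘ₗ reverse = reverse ∘ₗ midMap k τ.toLinearMap from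
    LinearMap.congr_fun this w
  ext x b a y
  have hpure (t : A ⊗[k] B) : map (mk k Y B y) ((mk k A X).flip x)
        (TensorProduct.comm k A B t) =
      reverse (map (mk k X A x) ((mk k B Y).flip y) t) := by
    induction t with
    | zero => simp
    | add t t' ht ht' => simp only [map_add, ht, ht']
    | tmul a' b' => simp [reverse_tmul]
  simp [reverse_tmul, midMap_tmul, ← hpure, ← mirror_comm]

theorem ComulCompat.mirror (hcompat : ComulCompat k comulA comulB τ.toLinearMap) :
    ComulCompat k ((TensorProduct.comm k B B).toLinearMap ∘ₗ comulB)
      ((TensorProduct.comm k A A).toLinearMap ∘ₗ comulA) (mirror τ).toLinearMap := by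
  refine TensorProduct.ext' fun a b ↦ ?_
  have h := congrArg reverse (LinearMap.congr_fun hcompat (b ⊗ₜ a))
  simp only [LinearMap.comp_apply, ← midMap_mirror_reverse, ← map_mirror_reverse] at h
  simpa only [LinearMap.comp_apply, LinearEquiv.coe_coe, reverse_map, ← mirror_comm,
    TensorProduct.comm_tmul] using h

end ComulCompat

section Main

variable {k A B : Type*} [Field k] [AddCommGroup A] [Module k A] [AddCommGroup B] [Module k B]
  {mulA : A ⊗[k] A →ₗ[k] A} {unitA : k →ₗ[k] A} {comulA : A →ₗ[k] A ⊗[k] A} {counitA : A →ₗ[k] k}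
  {mulB : B ⊗[k] B →ₗ[k] B} {unitB : k →ₗ[k] B} {comulB : B →ₗ[k] B ⊗[k] B} {counitB : B →ₗ[k] k}

theorem IsCounitalCoassoc.comul_injective (h : IsCounitalCoassoc k comulA counitA) :
    Function.Injective comulA :=
  Function.LeftInverse.injective h.sliceRight_comul

theorem IsFrobenius.sliceLeft_comul_one (h : IsFrobenius k mulA unitA comulA counitA) (a : A) :
    sliceLeft (curry (counitA ∘ₗ mulA) a) (comulA (unitA 1)) = a := by
  have hslice (w : A ⊗[k] A) : sliceLeft counitA
        (map mulA LinearMap.id ((TensorProduct.assoc k A A A).symm (a ⊗ₜ w))) =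
      sliceLeft (curry (counitA ∘ₗ mulA) a) w := by
    induction w with
    | zero => simp
    | add u v hu hv => simp only [map_add, tmul_add, hu, hv]
    | tmul x y => simp
  have hcomul := LinearMap.congr_fun h.2.2.2 (a ⊗ₜ unitA 1)
  simp only [LinearMap.comp_apply, map_tmul, LinearMap.id_apply, LinearEquiv.coe_coe,
    h.1.mul_one] at hcomul
  rw [← hslice, ← hcomul, h.2.1.sliceLeft_comul]

theorem IsFrobenius.sliceRight_comul_one (h : IsFrobenius k mulA unitA comulA counitA) (a : A) :
    sliceRight ((curry (counitA ∘ₗ mulA)).flip a) (comulA (unitA 1)) = a := by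
  rw [← contract_apply, ← LinearMap.comp_apply, h.contract_comul, curry_apply,
    h.1.one_mul]

theorem ComulCompat.sliceRight_counit_apply {τ : B ⊗[k] A ≃ₗ[k] A ⊗[k] B}
    (hcompat : ComulCompat k comulA comulB τ.toLinearMap)
    (hτ : IsTwisting k mulA unitA mulB unitB τ.toLinearMap)
    (hA : IsFrobenius k mulA unitA comulA counitA) (hB : IsFrobenius k mulB unitB comulB counitB)
    (b : B) (a : A) : sliceRight counitB (τ (b ⊗ₜ a)) = counitB b • a :=
  hcompat.sliceRight_apply_tmul hA.2.1.comul_injective hB.2.1.sliceRight_comul hτ.apply_one_tmul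
    (fun b ↦ ⟨_, by simp [hB.1.mul_one], hB.sliceLeft_comul_one b⟩) b a

theorem ComulCompat.sliceLeft_counit_apply {τ : B ⊗[k] A ≃ₗ[k] A ⊗[k] B}
    (hcompat : ComulCompat k comulA comulB τ.toLinearMap)
    (hτ : IsTwisting k mulA unitA mulB unitB τ.toLinearMap)
    (hA : IsFrobenius k mulA unitA comulA counitA) (hB : IsFrobenius k mulB unitB comulB counitB)
    (b : B) (a : A) : sliceLeft counitA (τ (b ⊗ₜ a)) = counitA a • b := by
  rw [← sliceRight_comm, ← mirror_tmul]
  refine hcompat.mirror.sliceRight_apply_tmul (u := unitA 1)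
    ((TensorProduct.comm k B B).injective.comp hB.2.1.comul_injective) (fun a ↦ ?_) (fun b ↦ ?_)
    (fun a ↦ ⟨(curry (counitA ∘ₗ mulA)).flip a, ?_, ?_⟩) a b
  · exact (sliceRight_comm _ _).trans (hA.2.1.sliceLeft_comul a)
  · exact (mirror_tmul _ b).trans (congrArg _ (hτ.apply_tmul_one b))
  · simp [hA.1.one_mul]
  · exact (sliceLeft_comm _ _).trans (hA.sliceRight_comul_one a)

theorem ComulCompat.counitCompat {τ : B ⊗[k] A ≃ₗ[k] A ⊗[k] B}
    (hcompat : ComulCompat k comulA comulB τ.toLinearMap)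
    (hτ : IsTwisting k mulA unitA mulB unitB τ.toLinearMap)
    (hA : IsFrobenius k mulA unitA comulA counitA)
    (hB : IsFrobenius k mulB unitB comulB counitB) :
    CounitCompat k counitA counitB τ.toLinearMap :=
  counitCompat_iff.mpr
    ⟨hcompat.sliceLeft_counit_apply hτ hA hB, hcompat.sliceRight_counit_apply hτ hA hB⟩

end Main

end TTP

open TTP in
/-- Theorem 5.1 of the paper: the twisted tensor product of
Frobenius algebras, along a twisting map compatible with the comultiplications,
is a Frobenius algebra. -/
theorem twistedTensorProduct_isFrobenius
    {k A B : Type*} [Field k]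
    [AddCommGroup A] [Module k A] [AddCommGroup B] [Module k B]
    (mulA : A ⊗[k] A →ₗ[k] A) (unitA : k →ₗ[k] A)
    (comulA : A →ₗ[k] A ⊗[k] A) (counitA : A →ₗ[k] k)
    (mulB : B ⊗[k] B →ₗ[k] B) (unitB : k →ₗ[k] B)
    (comulB : B →ₗ[k] B ⊗[k] B) (counitB : B →ₗ[k] k)
    (hA : IsFrobenius k mulA unitA comulA counitA)
    (hB : IsFrobenius k mulB unitB comulB counitB)
    (τ : B ⊗[k] A ≃ₗ[k] A ⊗[k] B)
    (hτ : IsTwisting k mulA unitA mulB unitB τ.toLinearMap)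
    (hcompat : ComulCompat k comulA comulB τ.toLinearMap) :
    IsFrobenius k (tMul k mulA mulB τ.toLinearMap) (tUnit k unitA unitB)
      (tComul k comulA comulB τ.symm.toLinearMap) (tCounit k counitA counitB) :=
  isFrobenius_of_counitCompat (hcompat.counitCompat hτ hA hB) hτ hA hB
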